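/- Let t ≥ 1 and n ≥ t, and consider a red/blue edge-coloring of the complete graph on {1,…,N} with N ≥ (R(K_t,K_t) − 1)·n^2 + 1 containing no monochromatic ordered copy of P_n^t. Then there exist two monochromatic t-cliques X and Y of the same color such that the largest element of X equals the smallest element of Y and χ(X) ≥ χ(Y), where for a monochromatic t-clique Z, χ(Z) denotes the largest ℓ such that there is a monochromatic copy of P_ℓ^t (in the color of Z) whose last t vertices are the vertices of Z. -/

import Mathlib

/-- `χ i j` is the color of the edge `{i, j}` for `i < j`: `true` = red, `false` = blue.
The classical Ramsey property: every red/blue coloring of `K_N` contains a red `K_s`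
or a blue `K_n`. -/
def HasRamseyProp (s n N : ℕ) : Prop :=
  ∀ χ : Fin N → Fin N → Bool,
    (∃ f : Fin s → Fin N, StrictMono f ∧ ∀ i j : Fin s, i < j → χ (f i) (f j) = true) ∨
    (∃ f : Fin n → Fin N, StrictMono f ∧ ∀ i j : Fin n, i < j → χ (f i) (f j) = false)

/-- The classical Ramsey number `R(K_s, K_n)`. -/
noncomputable def ramsey (s n : ℕ) : ℕ := sInf {N | HasRamseyProp s n N}

/-- `X` is a `b`-monochromatic clique. -/
def MonoClique {N : ℕ} (χ : Fin N → Fin N → Bool) (b : Bool) (X : Finset (Fin N)) : Prop :=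
  ∀ a ∈ X, ∀ c ∈ X, a < c → χ a c = b

/-- There is a `b`-monochromatic ordered copy of `P_ℓ^t` whose last `t` vertices are
exactly the vertices of `X`. -/
def EndsAt {N : ℕ} (χ : Fin N → Fin N → Bool) (b : Bool) (t ℓ : ℕ)
    (X : Finset (Fin N)) : Prop :=
  ∃ f : Fin ℓ → Fin N, StrictMono f ∧
    (∀ i j : Fin ℓ, i < j → (j : ℕ) ≤ (i : ℕ) + t → χ (f i) (f j) = b) ∧
    (∀ x : Fin N, x ∈ X ↔ ∃ i : Fin ℓ, ℓ - t ≤ (i : ℕ) ∧ f i = x)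

/-- `χ(X)`: the largest `ℓ` such that some `b`-monochromatic copy of `P_ℓ^t` ends at the
`t`-clique `X`. -/
noncomputable def chiVal {N : ℕ} (χ : Fin N → Fin N → Bool) (b : Bool) (t : ℕ)
    (X : Finset (Fin N)) : ℕ :=
  sSup {ℓ | EndsAt χ b t ℓ X}

/-!
A set of at least `R(K_t, K_t)` vertices contains a monochromatic `t`-clique `Y`. Label each vertex
`v` with the pair of the largest values of `χ` on the red and on the blue `t`-cliques with largest
element `v` (`0` if there are none). As there is no monochromatic `P_n^t`, each label has entries
below `n`, so some `R(K_t, K_t)` vertices share a label, and `Y` can be taken among them. With `z`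
and `w` the smallest and the largest element of `Y`, the label of `z` in the color of `Y` is that of
`w`, hence at least `χ(Y) ≥ t > 0`. So it is attained by a `t`-clique `X` with largest element `z`.
-/

section Ramsey

theorem exists_sublist_pairwise_of_choose_le_length {α : Type*} (c : α → α → Bool) {s n : ℕ}
    {l : List α} (hl : (s + n).choose s ≤ l.length) :
    (∃ l' : List α, l'.Sublist l ∧ l'.length = s ∧ l'.Pairwise (c · · = true)) ∨
      ∃ l' : List α, l'.Sublist l ∧ l'.length = n ∧ l'.Pairwise (c · · = false) := by
  induction s generalizing n l with
  | zero => exact .inl ⟨[], by simp⟩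
  | succ s ihs =>
    induction n generalizing l with
    | zero => exact .inr ⟨[], by simp⟩
    | succ n ihn =>
      obtain _ | ⟨a, l⟩ := l
      · exact absurd hl (Nat.choose_pos (Nat.le_add_right _ _)).not_ge
      have hpascal : (s + 1 + (n + 1)).choose (s + 1) =
          (s + (n + 1)).choose s + (s + 1 + n).choose (s + 1) := by
        rw [← add_assoc, Nat.choose_succ_succ, add_right_comm s 1 n, add_assoc s n 1]
      have hsplit := l.length_eq_length_filter_add (c a)
      have hlarge : (s + (n + 1)).choose s ≤ (l.filter (c a)).length ∨
          (s + 1 + n).choose (s + 1) ≤ (l.filter (!c a ·)).length := by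
        rw [List.length_cons] at hl
        omega
      rcases hlarge with hred | hblue
      · rcases ihs hred with ⟨l', hsub, hlen, hpair⟩ | ⟨l', hsub, hlen, hpair⟩
        · exact .inl ⟨a :: l', (hsub.trans List.filter_sublist).cons_cons a, by simpa using hlen,
            hpair.cons fun x hx ↦ (List.mem_filter.1 (hsub.subset hx)).2⟩
        · exact .inr ⟨l', (hsub.trans List.filter_sublist).cons a, hlen, hpair⟩
      · rcases ihn hblue with ⟨l', hsub, hlen, hpair⟩ | ⟨l', hsub, hlen, hpair⟩
        · exact .inl ⟨l', (hsub.trans List.filter_sublist).cons a, hlen, hpair⟩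
        · exact .inr ⟨a :: l', (hsub.trans List.filter_sublist).cons_cons a, by simpa using hlen,
            hpair.cons fun x hx ↦ by simpa using (List.mem_filter.1 (hsub.subset hx)).2⟩

theorem exists_strictMono_of_pairwise {α : Type*} [Preorder α] {R : α → α → Prop} {l : List α}
    {k : ℕ} (hlt : l.Pairwise (· < ·)) (hR : l.Pairwise R) (hk : l.length = k) :
    ∃ f : Fin k → α, StrictMono f ∧ ∀ i j, i < j → R (f i) (f j) := by
  subst hk
  exact ⟨l.get, fun i j hij ↦ List.pairwise_iff_get.1 hlt i j hij, List.pairwise_iff_get.1 hR⟩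

theorem hasRamseyProp_choose (s n : ℕ) : HasRamseyProp s n ((s + n).choose s) := fun χ ↦
  have hlt := List.pairwise_lt_finRange ((s + n).choose s)
  (exists_sublist_pairwise_of_choose_le_length χ List.length_finRange.ge).imp
    (fun ⟨_, hsub, hlen, hred⟩ ↦ exists_strictMono_of_pairwise (hlt.sublist hsub) hred hlen)
    (fun ⟨_, hsub, hlen, hblue⟩ ↦ exists_strictMono_of_pairwise (hlt.sublist hsub) hblue hlen)

theorem hasRamseyProp_ramsey (s n : ℕ) : HasRamseyProp s n (ramsey s n) :=
  Nat.sInf_mem (s := {N | HasRamseyProp s n N}) ⟨_, hasRamseyProp_choose s n⟩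

end Ramsey

section Cliques

variable {N M s t n m : ℕ} {χ : Fin N → Fin N → Bool} {b : Bool}

theorem monoClique_map {k : ℕ} {f : Fin k ↪o Fin N} (hf : ∀ i j, i < j → χ (f i) (f j) = b) :
    MonoClique χ b (Finset.univ.map f.toEmbedding) := by
  simpa [MonoClique] using hf

theorem HasRamseyProp.exists_monoClique_subset (hM : HasRamseyProp s n M)
    (χ : Fin N → Fin N → Bool) {S : Finset (Fin N)} (hS : M ≤ S.card) :
    (∃ X ⊆ S, X.card = s ∧ MonoClique χ true X) ∨
      ∃ X ⊆ S, X.card = n ∧ MonoClique χ false X := by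
  let e : Fin M ↪o Fin N := S.orderEmbOfCardLe hS
  have exists_of_copy {k : ℕ} {b : Bool} (f : Fin k → Fin M) (hf : StrictMono f)
      (hb : ∀ i j, i < j → χ (e (f i)) (e (f j)) = b) :
      ∃ X ⊆ S, X.card = k ∧ MonoClique χ b X := by
    let g : Fin k ↪o Fin N := (OrderEmbedding.ofStrictMono f hf).trans e
    refine ⟨Finset.univ.map g.toEmbedding, fun x hx ↦ ?_, by simp, monoClique_map hb⟩
    obtain ⟨i, -, rfl⟩ := Finset.mem_map.1 hx
    exact S.orderEmbOfCardLe_mem hS (f i)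
  exact (hM fun i j ↦ χ (e i) (e j)).imp (fun ⟨f, hf, hb⟩ ↦ exists_of_copy f hf hb)
    (fun ⟨f, hf, hb⟩ ↦ exists_of_copy f hf hb)

open Classical in
/-- The `b`-monochromatic `t`-cliques with largest element `v`, over which the label of `v` is a
maximum. -/
noncomputable def cliquesEndingAt (χ : Fin N → Fin N → Bool) (b : Bool) (t : ℕ) (v : Fin N) :
    Finset (Finset (Fin N)) :=
  {X | X.card = t ∧ MonoClique χ b X ∧ IsGreatest (X : Set (Fin N)) v}

theorem mem_cliquesEndingAt {v : Fin N} {X : Finset (Fin N)} :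
    X ∈ cliquesEndingAt χ b t v ↔
      X.card = t ∧ MonoClique χ b X ∧ IsGreatest (X : Set (Fin N)) v := by
  simp [cliquesEndingAt]

/-- The largest weight of a `b`-monochromatic `t`-clique with largest element `v`, with the value
`0` if there is no such clique. It is one entry of the label of `v`. -/
noncomputable def maxWeight (χ : Fin N → Fin N → Bool) (b : Bool) (t : ℕ)
    (w : Finset (Fin N) → ℕ) (v : Fin N) : ℕ :=
  (cliquesEndingAt χ b t v).sup w

theorem maxWeight_le {w : Finset (Fin N) → ℕ}
    (hw : ∀ X, X.card = t → MonoClique χ b X → w X ≤ m) (v : Fin N) :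
    maxWeight χ b t w v ≤ m :=
  Finset.sup_le fun X hX ↦
    have ⟨hcard, hmono, _⟩ := mem_cliquesEndingAt.1 hX
    hw X hcard hmono

theorem exists_card_le_and_maxWeight_eq {w : Bool → Finset (Fin N) → ℕ}
    (hw : ∀ b X, X.card = t → MonoClique χ b X → w b X ≤ m)
    (hN : (M - 1) * (m + 1) ^ 2 < N) :
    ∃ S : Finset (Fin N), M ≤ S.card ∧
      ∀ b, ∀ u ∈ S, ∀ v ∈ S, maxWeight χ b t (w b) u = maxWeight χ b t (w b) v := by
  let label (v : Fin N) (b : Bool) : Fin (m + 1) :=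
    ⟨maxWeight χ b t (w b) v, Nat.lt_succ_of_le (maxWeight_le (hw b) v)⟩
  obtain ⟨p, hp⟩ := Fintype.exists_lt_card_fiber_of_mul_lt_card label (n := M - 1) (by
    simpa [mul_comm] using hN)
  refine ⟨_, Nat.le_of_pred_lt hp, fun b u hu v hv ↦ ?_⟩
  have huv : label u = label v :=
    (Finset.mem_filter.1 hu).2.trans (Finset.mem_filter.1 hv).2.symm
  exact congrArg Fin.val (congrFun huv b)

theorem HasRamseyProp.exists_isGreatest_isLeast_weight_le (hM : HasRamseyProp t t M) (ht : 0 < t)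
    {w : Bool → Finset (Fin N) → ℕ}
    (hw : ∀ b X, X.card = t → MonoClique χ b X → w b X ∈ Set.Icc 1 m)
    (hN : (M - 1) * (m + 1) ^ 2 < N) :
    ∃ b X Y, X.card = t ∧ Y.card = t ∧ MonoClique χ b X ∧ MonoClique χ b Y ∧
      (∃ z, IsGreatest (X : Set (Fin N)) z ∧ IsLeast (Y : Set (Fin N)) z) ∧ w b Y ≤ w b X := by
  obtain ⟨S, hMS, hS⟩ := exists_card_le_and_maxWeight_eq (fun b X hX h ↦ (hw b X hX h).2) hN
  obtain ⟨b, Y, hYS, hY, hYb⟩ : ∃ b, ∃ Y ⊆ S, Y.card = t ∧ MonoClique χ b Y :=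
    (hM.exists_monoClique_subset χ hMS).elim (⟨true, ·⟩) (⟨false, ·⟩)
  have hne : Y.Nonempty := Finset.card_pos.1 (hY ▸ ht)
  have hmax : w b Y ≤ maxWeight χ b t (w b) (Y.max' hne) :=
    Finset.le_sup (mem_cliquesEndingAt.2 ⟨hY, hYb, Y.isGreatest_max' hne⟩)
  have hmin : w b Y ≤ maxWeight χ b t (w b) (Y.min' hne) :=
    hmax.trans_eq (hS b _ (hYS (Y.max'_mem hne)) _ (hYS (Y.min'_mem hne)))
  obtain ⟨X, hX, hle⟩ := (Finset.le_sup_iff (hw b Y hY hYb).1).1 hmin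
  obtain ⟨hXt, hXb, hXz⟩ := mem_cliquesEndingAt.1 hX
  exact ⟨b, X, Y, hXt, hY, hXb, hYb, ⟨_, hXz, Y.isLeast_min' hne⟩, hle⟩

end Cliques

section PathPower

variable {N t n k ℓ : ℕ} {χ : Fin N → Fin N → Bool} {b : Bool} {X : Finset (Fin N)}

/-- There is a `b`-monochromatic ordered copy of `P_n^t`; this is `EndsAt` without its condition on
the last `t` vertices. -/
def HasMonoPathPower (χ : Fin N → Fin N → Bool) (b : Bool) (t n : ℕ) : Prop :=
  ∃ f : Fin n → Fin N, StrictMono f ∧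
    ∀ i j : Fin n, i < j → (j : ℕ) ≤ (i : ℕ) + t → χ (f i) (f j) = b

theorem HasMonoPathPower.mono (h : HasMonoPathPower χ b t n) (hkn : k ≤ n) :
    HasMonoPathPower χ b t k :=
  let ⟨f, hf, hb⟩ := h
  ⟨f ∘ Fin.castLE hkn, hf.comp (Fin.strictMono_castLE hkn),
    fun i j ↦ hb (i.castLE hkn) (j.castLE hkn)⟩

theorem HasMonoPathPower.le (h : HasMonoPathPower χ b t n) : n ≤ N :=
  let ⟨_, hf, _⟩ := h
  by simpa using Fintype.card_le_of_injective _ hf.injective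

theorem EndsAt.hasMonoPathPower (h : EndsAt χ b t ℓ X) : HasMonoPathPower χ b t ℓ :=
  let ⟨f, hf, hb, _⟩ := h
  ⟨f, hf, hb⟩

theorem bddAbove_setOf_endsAt (χ : Fin N → Fin N → Bool) (b : Bool) (t : ℕ)
    (X : Finset (Fin N)) : BddAbove {ℓ | EndsAt χ b t ℓ X} :=
  ⟨N, fun _ h ↦ h.hasMonoPathPower.le⟩

theorem MonoClique.endsAt_card (hX : MonoClique χ b X) (hXt : X.card ≤ t) :
    EndsAt χ b t X.card X := by
  let f := X.orderEmbOfFin rfl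
  refine ⟨f, f.strictMono, fun i j hij _ ↦ hX _ (X.orderEmbOfFin_mem rfl i) _
    (X.orderEmbOfFin_mem rfl j) (f.strictMono hij), fun x ↦ ?_⟩
  have hrange : x ∈ X ↔ ∃ i, f i = x := by
    rw [← Set.mem_range, X.range_orderEmbOfFin, Finset.mem_coe]
  simpa [Nat.sub_eq_zero_of_le hXt] using hrange

theorem MonoClique.card_le_chiVal (hX : MonoClique χ b X) (hXt : X.card ≤ t) :
    X.card ≤ chiVal χ b t X :=
  le_csSup (bddAbove_setOf_endsAt χ b t X) (hX.endsAt_card hXt)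

theorem MonoClique.endsAt_chiVal (hX : MonoClique χ b X) (hXt : X.card ≤ t) :
    EndsAt χ b t (chiVal χ b t X) X :=
  Nat.sSup_mem ⟨_, hX.endsAt_card hXt⟩ (bddAbove_setOf_endsAt χ b t X)

theorem MonoClique.chiVal_lt (hX : MonoClique χ b X) (hXt : X.card ≤ t)
    (hn : ¬ HasMonoPathPower χ b t n) : chiVal χ b t X < n :=
  lt_of_not_ge fun h ↦ hn ((hX.endsAt_chiVal hXt).hasMonoPathPower.mono h)

end PathPower

/-- if `t ≥ 1`, `n ≥ t`, `N ≥ (R(K_t,K_t) − 1)·n² + 1` and a red/blue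
coloring of `K_N` has no monochromatic ordered copy of `P_n^t`, then there are two
monochromatic `t`-cliques `X`, `Y` of the same color with `max X = min Y` and
`χ(X) ≥ χ(Y)`. -/
theorem stmt14 (t n N : ℕ) (ht : 1 ≤ t) (hn : t ≤ n)
    (hN : (ramsey t t - 1) * n ^ 2 + 1 ≤ N) (χ : Fin N → Fin N → Bool)
    (hno : ¬ ∃ (b : Bool) (f : Fin n → Fin N), StrictMono f ∧
      ∀ i j : Fin n, i < j → (j : ℕ) ≤ (i : ℕ) + t → χ (f i) (f j) = b) :
    ∃ (b : Bool) (X Y : Finset (Fin N)),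
      X.card = t ∧ Y.card = t ∧ MonoClique χ b X ∧ MonoClique χ b Y ∧
      (∃ z : Fin N, z ∈ X ∧ z ∈ Y ∧ (∀ a ∈ X, a ≤ z) ∧ (∀ c ∈ Y, z ≤ c)) ∧
      chiVal χ b t Y ≤ chiVal χ b t X := by
  have hpos : 0 < n := ht.trans hn
  have hchi (b : Bool) (X : Finset (Fin N)) (hX : X.card = t) (hXb : MonoClique χ b X) :
      chiVal χ b t X ∈ Set.Icc 1 (n - 1) :=
    ⟨(ht.trans_eq hX.symm).trans (hXb.card_le_chiVal hX.le),
      Nat.le_sub_one_of_lt (hXb.chiVal_lt hX.le fun h ↦ hno ⟨b, h⟩)⟩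
  have hN' : (ramsey t t - 1) * (n - 1 + 1) ^ 2 < N := by rwa [Nat.sub_add_cancel hpos]
  obtain ⟨b, X, Y, hX, hY, hXb, hYb, ⟨z, hXz, hYz⟩, hle⟩ :=
    (hasRamseyProp_ramsey t t).exists_isGreatest_isLeast_weight_le ht hchi hN'
  exact ⟨b, X, Y, hX, hY, hXb, hYb, ⟨z, hXz.1, hYz.1, fun _ ha ↦ hXz.2 ha, fun _ hc ↦ hYz.2 hc⟩,
    hle⟩
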